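/- arXiv:math/0112086 — 4 statements merged into one kernel-verified Lean document; each statement's English description precedes it below -/
import Mathlib

section
/- Let S = {1,3,5,7,9,11,13,19}. For every integer k with 0 ≤ k ≤ 7, one has s̃(2^{27−3k}−8, S) = 8−k, and every (2^{27−3k}−8)-tiling sequence (b_1,ℓ_1),…,(b_{8−k},ℓ_{8−k}) with tiles in S of minimal length 8−k satisfies one of the following: (a) (b_{8−k},ℓ_{8−k}) = (24−3k, 7); (b) (b_{8−k},ℓ_{8−k}) = (23−3k, 13) and (b_{7−k},ℓ_{7−k}) = (21−3k, 11); (c) (b_{8−k},ℓ_{8−k}) = (23−3k, 11) and (b_{7−k},ℓ_{7−k}) = (21−3k, 19); (d) (b_{8−k},ℓ_{8−k}) = (23−3k, 13), (b_{7−k},ℓ_{7−k}) = (20−3k, 19) and (b_{6−k},ℓ_{6−k}) = (18−3k, 19). -/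
open scoped BigOperators

/-- `s(n)`: the number of 1's in the binary expansion of `n`. -/
def binDigitSum (n : ℕ) : ℕ := (Nat.digits 2 n).sum

/-- An `r`-tiling sequence with tiles in `S`, recorded as a list of pairs `(b_i, ℓ_i)`:
each `ℓ_i ∈ S`, the `b_i` are weakly increasing, `ℓ_i > ℓ_{i+1}` whenever `b_i = b_{i+1}`,
and `∑ ℓ_i·2^{b_i} = r`. -/
def IsTiling (S : Finset ℕ) (r : ℕ) (L : List (ℕ × ℕ)) : Prop :=
  (∀ p ∈ L, p.2 ∈ S) ∧
  L.Chain' (fun p q => p.1 ≤ q.1 ∧ (p.1 = q.1 → q.2 < p.2)) ∧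
  (L.map fun p => p.2 * 2 ^ p.1).sum = r

/-- `s̃(r,S)`: the minimal length of an `r`-tiling sequence (`⊤` if none exists). -/
noncomputable def stilde (S : Finset ℕ) (r : ℕ) : ℕ∞ :=
  sInf {n : ℕ∞ | ∃ L : List (ℕ × ℕ), IsTiling S r L ∧ (L.length : ℕ∞) = n}

/-- `K̃(r,S)`: the set of `r`-tiling sequences of minimal length. -/
def Ktilde (S : Finset ℕ) (r : ℕ) : Set (List (ℕ × ℕ)) :=
  {L | IsTiling S r L ∧ (L.length : ℕ∞) = stilde S r}

/-!
Merging two equal powers `2 ^ i + 2 ^ i = 2 ^ (i + 1)` shows that a sum of `N` powers of two has at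
most `N` binary ones, with equality only if the exponents are distinct. The number
`2 ^ m - 2 ^ a` has `m - a` ones, and a tile in `S` has at most three, so a tiling needs at least
`(m - a) / 3` tiles. If this bound is attained, every tile has exactly three ones, i.e. it is
`7`, `11`, `13` or `19`, and the binary supports of the tiles partition `[a, m)`.

The tile covering `m - 1` leaves a gap in its support unless it is a `7`, and asking which tile can
fill each gap without overlapping the others or passing `m` leaves only the four endings. The tiles
of each ending exactly cover an interval `[b, m)`, so all other tiles start below `b` and
precede them in the sequence.
-/

lemma binDigitSum_eq_length_bitIndices (n : ℕ) : binDigitSum n = n.bitIndices.length := by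
  induction n using Nat.strong_induction_on with
  | _ n ih =>
    rcases n.eq_zero_or_pos with rfl | hn
    · simp [binDigitSum]
    have hdigits : binDigitSum n = n % 2 + binDigitSum (n / 2) := by
      simp [binDigitSum, Nat.digits_def' one_lt_two hn]
    rw [hdigits, ih (n / 2) (Nat.div_lt_self hn one_lt_two)]
    rcases n.even_or_odd' with ⟨k, rfl | rfl⟩
    · simp
    · simp [Nat.add_comm 1, Nat.mul_add_div two_pos]

lemma toFinset_bitIndices_sum_two_pow_of_nodup {l : List ℕ} (hl : l.Nodup) :
    (l.map (2 ^ ·)).sum.bitIndices.toFinset = l.toFinset := by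
  rw [← List.sum_toFinset _ hl, Finset.toFinset_bitIndices_sum_two_pow]

lemma binDigitSum_sum_two_pow_of_nodup {l : List ℕ} (hl : l.Nodup) :
    binDigitSum (l.map (2 ^ ·)).sum = l.length := by
  rw [binDigitSum_eq_length_bitIndices, ← List.toFinset_card_of_nodup Nat.bitIndices_nodup,
    toFinset_bitIndices_sum_two_pow_of_nodup hl, List.toFinset_card_of_nodup hl]

lemma exists_shorter_sum_two_pow_eq {l : List ℕ} (hl : ¬l.Nodup) :
    ∃ t : List ℕ, t.length < l.length ∧ (t.map (2 ^ ·)).sum = (l.map (2 ^ ·)).sum := by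
  obtain ⟨i, hi⟩ := List.exists_duplicate_iff_not_nodup.2 hl
  obtain ⟨t, ht⟩ := (List.duplicate_iff_sublist.1 hi).exists_perm_append
  refine ⟨(i + 1) :: t, by simp [ht.length_eq], ?_⟩
  rw [(ht.map _).sum_eq]
  simp [pow_succ, mul_two, add_assoc]

lemma binDigitSum_sum_two_pow_le (l : List ℕ) : binDigitSum (l.map (2 ^ ·)).sum ≤ l.length := by
  induction h : l.length using Nat.strong_induction_on generalizing l with
  | _ n ih =>
    by_cases hl : l.Nodup
    · exact (h ▸ binDigitSum_sum_two_pow_of_nodup hl).le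
    · obtain ⟨t, ht, hsum⟩ := exists_shorter_sum_two_pow_eq hl
      exact hsum ▸ (ih t.length (h ▸ ht) t rfl).trans (h ▸ ht).le

lemma nodup_of_length_le_binDigitSum {l : List ℕ}
    (h : l.length ≤ binDigitSum (l.map (2 ^ ·)).sum) : l.Nodup := by
  by_contra hl
  obtain ⟨t, ht, hsum⟩ := exists_shorter_sum_two_pow_eq hl
  exact (h.trans (hsum ▸ binDigitSum_sum_two_pow_le t)).not_gt ht

lemma sum_Ico_two_pow {a m : ℕ} (h : a ≤ m) : ∑ i ∈ Finset.Ico a m, 2 ^ i = 2 ^ m - 2 ^ a := by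
  induction m, h using Nat.le_induction with
  | base => simp
  | succ m h ih =>
    have : 2 ^ a ≤ 2 ^ m := Nat.pow_le_pow_right two_pos h
    rw [Finset.sum_Ico_succ_top h, ih, pow_succ]
    omega

lemma toFinset_bitIndices_two_pow_sub {a m : ℕ} (h : a ≤ m) :
    (2 ^ m - 2 ^ a).bitIndices.toFinset = Finset.Ico a m := by
  rw [← sum_Ico_two_pow h, Finset.toFinset_bitIndices_sum_two_pow]

lemma binDigitSum_two_pow_sub {a m : ℕ} (h : a ≤ m) : binDigitSum (2 ^ m - 2 ^ a) = m - a := by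
  rw [binDigitSum_eq_length_bitIndices, ← List.toFinset_card_of_nodup Nat.bitIndices_nodup,
    toFinset_bitIndices_two_pow_sub h, Nat.card_Ico]

/-- The binary support of the tile `p`, i.e. the positions of the 1's of `p.2 * 2 ^ p.1`. -/
def tileBits (p : ℕ × ℕ) : List ℕ := p.2.bitIndices.map (p.1 + ·)

lemma fst_mem_tileBits {p : ℕ × ℕ} (hp : Odd p.2) : p.1 ∈ tileBits p := by
  simpa [tileBits] using Nat.odd_iff.1 hp

lemma sum_two_pow_tileBits (p : ℕ × ℕ) : ((tileBits p).map (2 ^ ·)).sum = p.2 * 2 ^ p.1 := by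
  simp only [tileBits, List.map_map, Function.comp_def, pow_add, List.sum_map_mul_left,
    Nat.sum_map_two_pow_bitIndices, mul_comm p.2]

lemma sum_two_pow_flatMap_tileBits (L : List (ℕ × ℕ)) :
    ((L.flatMap tileBits).map (2 ^ ·)).sum = (L.map fun p => p.2 * 2 ^ p.1).sum := by
  simp only [← sum_two_pow_tileBits]
  rw [List.flatMap, List.map_flatten, List.sum_flatten, List.map_map, List.map_map]
  rfl

lemma length_flatMap_tileBits (L : List (ℕ × ℕ)) :
    (L.flatMap tileBits).length = (L.map fun p => binDigitSum p.2).sum := by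
  simp only [List.length_flatMap, tileBits, List.length_map, binDigitSum_eq_length_bitIndices]

lemma mem_tileBits_seven {b i : ℕ} : i ∈ tileBits (b, 7) ↔ i = b ∨ i = b + 1 ∨ i = b + 2 := by
  simp [tileBits, show Nat.bitIndices 7 = [0, 1, 2] by decide, eq_comm]

lemma mem_tileBits_eleven {b i : ℕ} : i ∈ tileBits (b, 11) ↔ i = b ∨ i = b + 1 ∨ i = b + 3 := by
  simp [tileBits, show Nat.bitIndices 11 = [0, 1, 3] by decide, eq_comm]

lemma mem_tileBits_thirteen {b i : ℕ} :
    i ∈ tileBits (b, 13) ↔ i = b ∨ i = b + 2 ∨ i = b + 3 := by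
  simp [tileBits, show Nat.bitIndices 13 = [0, 2, 3] by decide, eq_comm]

lemma mem_tileBits_nineteen {b i : ℕ} :
    i ∈ tileBits (b, 19) ↔ i = b ∨ i = b + 1 ∨ i = b + 4 := by
  simp [tileBits, show Nat.bitIndices 19 = [0, 1, 4] by decide, eq_comm]

namespace IsTiling

variable {S : Finset ℕ} {r d : ℕ} {L : List (ℕ × ℕ)}

lemma sum_two_pow_eq (hL : IsTiling S r L) : ((L.flatMap tileBits).map (2 ^ ·)).sum = r :=
  (sum_two_pow_flatMap_tileBits L).trans hL.2.2

lemma sum_binDigitSum_le (hS : ∀ l ∈ S, binDigitSum l ≤ d) (hL : IsTiling S r L) :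
    (L.map fun p => binDigitSum p.2).sum ≤ d * L.length := by
  simpa [mul_comm] using List.sum_le_card_nsmul (L.map fun p => binDigitSum p.2) d
    (List.forall_mem_map.2 fun p hp => hS _ (hL.1 p hp))

lemma binDigitSum_le_sum (hL : IsTiling S r L) :
    binDigitSum r ≤ (L.map fun p => binDigitSum p.2).sum := by
  rw [← length_flatMap_tileBits, ← hL.sum_two_pow_eq]
  exact binDigitSum_sum_two_pow_le _

lemma binDigitSum_le (hS : ∀ l ∈ S, binDigitSum l ≤ d) (hL : IsTiling S r L) :
    binDigitSum r ≤ d * L.length :=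
  hL.binDigitSum_le_sum.trans (hL.sum_binDigitSum_le hS)

lemma binDigitSum_eq_of_mem (hS : ∀ l ∈ S, binDigitSum l ≤ d) (hL : IsTiling S r L)
    (h : d * L.length ≤ binDigitSum r) {p : ℕ × ℕ} (hp : p ∈ L) : binDigitSum p.2 = d := by
  refine (hS _ (hL.1 p hp)).eq_of_not_lt fun hlt => ?_
  have hsum := List.sum_lt_sum (fun q : ℕ × ℕ => binDigitSum q.2) (fun _ => d)
    (fun q hq => hS _ (hL.1 q hq)) ⟨p, hp, hlt⟩
  simp only [List.map_const', List.sum_replicate, smul_eq_mul, mul_comm] at hsum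
  exact (h.trans hL.binDigitSum_le_sum).not_gt hsum

lemma nodup_flatMap_tileBits (hS : ∀ l ∈ S, binDigitSum l ≤ d) (hL : IsTiling S r L)
    (h : d * L.length ≤ binDigitSum r) : (L.flatMap tileBits).Nodup := by
  apply nodup_of_length_le_binDigitSum
  rw [length_flatMap_tileBits, hL.sum_two_pow_eq]
  exact (hL.sum_binDigitSum_le hS).trans h

end IsTiling

/-- The order in which the tiles of a tiling sequence are listed: increasing position, and
decreasing tile at equal positions. -/
def TileLT (p q : ℕ × ℕ) : Prop := p.1 ≤ q.1 ∧ (p.1 = q.1 → q.2 < p.2)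

instance : IsTrans (ℕ × ℕ) TileLT := ⟨fun _ _ _ ⟨h₁, h₁'⟩ ⟨h₂, h₂'⟩ => by constructor <;> omega⟩

instance : Std.Asymm TileLT := ⟨fun _ _ ⟨h₁, h₁'⟩ ⟨h₂, h₂'⟩ => by omega⟩

lemma IsTiling.pairwise_tileLT {S : Finset ℕ} {r : ℕ} {L : List (ℕ × ℕ)} (hL : IsTiling S r L) :
    L.Pairwise TileLT :=
  List.isChain_iff_pairwise.1 hL.2.1

lemma isSuffix_of_pairwise {α : Type*} {r : α → α → Prop} [Std.Asymm r] {K L : List α}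
    {P : α → Prop} (hK : K.Pairwise r) (hL : L.Pairwise r) (hP : ∀ x y, r x y → P x → P y)
    (h : ∀ x, x ∈ K ↔ x ∈ L ∧ P x) : K <:+ L := by
  induction L with
  | nil => simp [List.eq_nil_iff_forall_not_mem, h]
  | cons x L ih =>
    obtain ⟨hx, hL'⟩ := List.pairwise_cons.1 hL
    by_cases hPx : P x
    · have hPL : ∀ y ∈ x :: L, P y := by
        simpa [hPx] using fun y hy => hP x y (hx y hy) hPx
      have hKL : K = x :: L := hK.eq_of_mem_iff hL fun y => by grind
      exact hKL ▸ List.suffix_rfl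
    · exact (ih hL' fun y => by grind).trans (List.suffix_cons x L)

/-- The binary supports of the tiles in `L` partition the interval `[a, m)`: the carry-free tilings
of `2 ^ m - 2 ^ a`. Disjointness is the `Nodup` condition on the concatenated supports. -/
structure TilesIco (L : List (ℕ × ℕ)) (a m : ℕ) : Prop where
  nodup : (L.flatMap tileBits).Nodup
  toFinset_eq : (L.flatMap tileBits).toFinset = Finset.Ico a m

lemma IsTiling.tilesIco {S : Finset ℕ} {d a m : ℕ} {L : List (ℕ × ℕ)} (ham : a ≤ m)
    (hS : ∀ l ∈ S, binDigitSum l ≤ d) (hL : IsTiling S (2 ^ m - 2 ^ a) L)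
    (h : d * L.length ≤ m - a) : TilesIco L a m := by
  have hnodup := hL.nodup_flatMap_tileBits hS (h.trans (binDigitSum_two_pow_sub ham).ge)
  refine ⟨hnodup, ?_⟩
  rw [← toFinset_bitIndices_sum_two_pow_of_nodup hnodup, hL.sum_two_pow_eq,
    toFinset_bitIndices_two_pow_sub ham]

/-- The tile set `S` of the theorem. -/
abbrev tileSet : Finset ℕ := {1, 3, 5, 7, 9, 11, 13, 19}

/-- The tiles in `tileSet` of maximal binary digit sum, which is three: the only ones
that a shortest tiling can use. -/
abbrev heavyTiles : Finset ℕ := {7, 11, 13, 19}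

lemma binDigitSum_le_three_of_mem_tileSet : ∀ l ∈ tileSet, binDigitSum l ≤ 3 := by
  simp [tileSet, binDigitSum]

lemma mem_heavyTiles_of_binDigitSum_eq_three :
    ∀ l ∈ tileSet, binDigitSum l = 3 → l ∈ heavyTiles := by
  simp [tileSet, heavyTiles, binDigitSum]

lemma odd_of_mem_heavyTiles : ∀ l ∈ heavyTiles, Odd l := by decide

namespace TilesIco

variable {L K : List (ℕ × ℕ)} {a m : ℕ} {p q : ℕ × ℕ} {i b : ℕ}

lemma mem_Ico (h : TilesIco L a m) (hp : p ∈ L) (hi : i ∈ tileBits p) : a ≤ i ∧ i < m := by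
  rw [← Finset.mem_Ico, ← h.toFinset_eq, List.mem_toFinset]
  exact List.mem_flatMap_of_mem hp hi

lemma exists_mem_tileBits (h : TilesIco L a m) (hi : a ≤ i) (him : i < m) :
    ∃ p ∈ L, i ∈ tileBits p := by
  rw [← List.mem_flatMap, ← List.mem_toFinset, h.toFinset_eq, Finset.mem_Ico]
  exact ⟨hi, him⟩

lemma eq_of_mem_tileBits (h : TilesIco L a m) (hp : p ∈ L) (hq : q ∈ L) (hip : i ∈ tileBits p)
    (hiq : i ∈ tileBits q) : p = q := by
  by_contra hpq
  have : Std.Symm (Function.onFun List.Disjoint tileBits) := ⟨fun _ _ h => h.symm⟩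
  exact (List.nodup_flatMap.1 h.nodup).2.forall hp hq hpq hip hiq

lemma isSuffix (h : TilesIco L a m) (hL : L.Pairwise TileLT) (hodd : ∀ p ∈ L, Odd p.2)
    (hK : K.Pairwise TileLT) (hKL : K ⊆ L) (hKb : ∀ p ∈ K, b ≤ p.1)
    (hcov : ∀ i, b ≤ i → i < m → ∃ p ∈ K, i ∈ tileBits p) : K <:+ L := by
  refine isSuffix_of_pairwise (P := fun p => b ≤ p.1) hK hL (fun p q hpq hp => hp.trans hpq.1)
    fun p => ⟨fun hp => ⟨hKL hp, hKb p hp⟩, fun ⟨hp, hbp⟩ => ?_⟩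
  have hstart := fst_mem_tileBits (hodd p hp)
  obtain ⟨q, hq, hpq⟩ := hcov p.1 hbp (h.mem_Ico hp hstart).2
  exact h.eq_of_mem_tileBits hp (hKL hq) hstart hpq ▸ hq

lemma exists_heavyTile_covering (h : TilesIco L a m) (hL : ∀ p ∈ L, p.2 ∈ heavyTiles)
    (hi : a ≤ i) (him : i < m) :
    ∃ c l, (c, l) ∈ L ∧ (l = 7 ∨ l = 11 ∨ l = 13 ∨ l = 19) ∧ i ∈ tileBits (c, l) ∧
      (∀ j ∈ tileBits (c, l), j < m) ∧
      ∀ p ∈ L, i ∉ tileBits p → ∀ j ∈ tileBits (c, l), j ∉ tileBits p := by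
  obtain ⟨⟨c, l⟩, hq, hiq⟩ := h.exists_mem_tileBits hi him
  refine ⟨c, l, hq, by simpa using hL _ hq, hiq, fun j hj => (h.mem_Ico hq hj).2,
    fun p hp hip j hj hjp => hip ?_⟩
  exact h.eq_of_mem_tileBits hp hq hjp hj ▸ hiq

lemma le_fst (h : TilesIco L a m) (hL : ∀ p ∈ L, p.2 ∈ heavyTiles) (hp : p ∈ L) : a ≤ p.1 :=
  (h.mem_Ico hp (fst_mem_tileBits (odd_of_mem_heavyTiles _ (hL _ hp)))).1

lemma nineteen_notMem (h : TilesIco L a (b + 5)) (hL : ∀ p ∈ L, p.2 ∈ heavyTiles) :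
    (b, 19) ∉ L := by
  intro hb
  have hab := h.le_fst hL hb
  obtain ⟨c, l, -, rfl | rfl | rfl | rfl, hi, hm, hd⟩ :=
    h.exists_heavyTile_covering hL (i := b + 3) (by omega) (by omega)
  all_goals
    have hd := hd _ hb (by simp [mem_tileBits_nineteen])
    simp only [mem_tileBits_seven, mem_tileBits_eleven, mem_tileBits_thirteen,
      mem_tileBits_nineteen, forall_eq_or_imp, forall_eq] at hi hm hd
    omega

lemma nineteen_mem_of_eleven_mem (h : TilesIco L a (b + 4)) (hL : ∀ p ∈ L, p.2 ∈ heavyTiles)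
    (hb : (b, 11) ∈ L) : ∃ c, b = c + 2 ∧ (c, 19) ∈ L := by
  have hab := h.le_fst hL hb
  obtain ⟨c, l, hc, rfl | rfl | rfl | rfl, hi, hm, hd⟩ :=
    h.exists_heavyTile_covering hL (i := b + 2) (by omega) (by omega)
  all_goals
    have hd := hd _ hb (by simp [mem_tileBits_eleven])
    simp only [mem_tileBits_seven, mem_tileBits_eleven, mem_tileBits_thirteen,
      mem_tileBits_nineteen, forall_eq_or_imp, forall_eq] at hi hm hd
    first | omega | exact ⟨c, by omega, hc⟩

lemma eleven_mem_or_nineteen_mem_of_thirteen_mem (h : TilesIco L a (b + 4))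
    (hL : ∀ p ∈ L, p.2 ∈ heavyTiles) (hb : (b, 13) ∈ L) :
    ∃ c, b = c + 2 ∧ (c, 11) ∈ L ∨ b = c + 3 ∧ (c, 19) ∈ L := by
  have hab := h.le_fst hL hb
  obtain ⟨c, l, hc, rfl | rfl | rfl | rfl, hi, hm, hd⟩ :=
    h.exists_heavyTile_covering hL (i := b + 1) (by omega) (by omega)
  all_goals
    have hd := hd _ hb (by simp [mem_tileBits_thirteen])
    simp only [mem_tileBits_seven, mem_tileBits_eleven, mem_tileBits_thirteen,
      mem_tileBits_nineteen, forall_eq_or_imp, forall_eq] at hi hm hd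
    first | omega | exact ⟨c, Or.inl ⟨by omega, hc⟩⟩ | exact ⟨c, Or.inr ⟨by omega, hc⟩⟩

lemma nineteen_mem_of_nineteen_mem_of_thirteen_mem (h : TilesIco L a (b + 7))
    (hL : ∀ p ∈ L, p.2 ∈ heavyTiles) (hb : (b, 19) ∈ L) (hb' : (b + 3, 13) ∈ L) :
    ∃ c, b = c + 2 ∧ (c, 19) ∈ L := by
  have hab := h.le_fst hL hb
  obtain ⟨c, l, hc, rfl | rfl | rfl | rfl, hi, hm, hd⟩ :=
    h.exists_heavyTile_covering hL (i := b + 2) (by omega) (by omega)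
  all_goals
    have hd' := hd _ hb' (by simp [mem_tileBits_thirteen])
    have hd := hd _ hb (by simp [mem_tileBits_nineteen])
    simp only [mem_tileBits_seven, mem_tileBits_eleven, mem_tileBits_thirteen,
      mem_tileBits_nineteen, forall_eq_or_imp, forall_eq] at hi hm hd hd'
    first | omega | exact ⟨c, by omega, hc⟩

lemma exists_top_tiles (h : TilesIco L a m) (ham : a < m) (hL : ∀ p ∈ L, p.2 ∈ heavyTiles) :
    ∃ b, m = b + 3 ∧ (b, 7) ∈ L ∨
      m = b + 6 ∧ (b, 11) ∈ L ∧ (b + 2, 13) ∈ L ∨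
      m = b + 6 ∧ (b, 19) ∈ L ∧ (b + 2, 11) ∈ L ∨
      m = b + 9 ∧ (b, 19) ∈ L ∧ (b + 2, 19) ∈ L ∧ (b + 5, 13) ∈ L := by
  obtain ⟨b, l, hb, rfl | rfl | rfl | rfl, htop, hm, -⟩ :=
    h.exists_heavyTile_covering hL (i := m - 1) (by omega) (by omega)
  all_goals
    simp only [mem_tileBits_seven, mem_tileBits_eleven, mem_tileBits_thirteen,
      mem_tileBits_nineteen, forall_eq_or_imp, forall_eq] at htop hm
  · exact ⟨b, Or.inl ⟨by omega, hb⟩⟩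
  · obtain rfl : m = b + 4 := by omega
    obtain ⟨c, rfl, hc⟩ := h.nineteen_mem_of_eleven_mem hL hb
    exact ⟨c, Or.inr <| Or.inr <| Or.inl ⟨rfl, hc, hb⟩⟩
  · obtain rfl : m = b + 4 := by omega
    obtain ⟨c, ⟨rfl, hc⟩ | ⟨rfl, hc⟩⟩ := h.eleven_mem_or_nineteen_mem_of_thirteen_mem hL hb
    · exact ⟨c, Or.inr <| Or.inl ⟨rfl, hc, hb⟩⟩
    · obtain ⟨d, rfl, hd⟩ := h.nineteen_mem_of_nineteen_mem_of_thirteen_mem hL hc hb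
      exact ⟨d, Or.inr <| Or.inr <| Or.inr ⟨rfl, hd, hc, hb⟩⟩
  · obtain rfl : m = b + 5 := by omega
    exact absurd hb (h.nineteen_notMem hL)

lemma exists_isSuffix (h : TilesIco L a m) (ham : a < m) (hL : ∀ p ∈ L, p.2 ∈ heavyTiles)
    (hsorted : L.Pairwise TileLT) :
    ∃ b, m = b + 3 ∧ [(b, 7)] <:+ L ∨
      m = b + 6 ∧ [(b, 11), (b + 2, 13)] <:+ L ∨
      m = b + 6 ∧ [(b, 19), (b + 2, 11)] <:+ L ∨
      m = b + 9 ∧ [(b, 19), (b + 2, 19), (b + 5, 13)] <:+ L := by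
  have hodd : ∀ p ∈ L, Odd p.2 := fun p hp => odd_of_mem_heavyTiles _ (hL p hp)
  obtain ⟨b, ⟨rfl, h₁⟩ | ⟨rfl, h₁, h₂⟩ | ⟨rfl, h₁, h₂⟩ | ⟨rfl, h₁, h₂, h₃⟩⟩ :=
    h.exists_top_tiles ham hL
  · refine ⟨b, Or.inl ⟨rfl, ?_⟩⟩
    refine h.isSuffix (b := b) hsorted hodd (by simp) (by simp [h₁]) (by simp) ?_
    simp only [List.mem_cons, List.not_mem_nil, or_false, exists_eq_left, mem_tileBits_seven]
    omega
  · refine ⟨b, Or.inr <| Or.inl ⟨rfl, ?_⟩⟩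
    refine h.isSuffix (b := b) hsorted hodd (by simp [TileLT]) (by simp [h₁, h₂]) (by simp) ?_
    simp only [List.mem_cons, List.not_mem_nil, or_false, exists_eq_or_imp, exists_eq_left,
      mem_tileBits_eleven, mem_tileBits_thirteen]
    omega
  · refine ⟨b, Or.inr <| Or.inr <| Or.inl ⟨rfl, ?_⟩⟩
    refine h.isSuffix (b := b) hsorted hodd (by simp [TileLT]) (by simp [h₁, h₂]) (by simp) ?_
    simp only [List.mem_cons, List.not_mem_nil, or_false, exists_eq_or_imp, exists_eq_left,
      mem_tileBits_eleven, mem_tileBits_nineteen]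
    omega
  · refine ⟨b, Or.inr <| Or.inr <| Or.inr ⟨rfl, ?_⟩⟩
    refine h.isSuffix (b := b) hsorted hodd (by simp [TileLT]) (by simp [h₁, h₂, h₃]) (by simp) ?_
    simp only [List.mem_cons, List.not_mem_nil, or_false, exists_eq_or_imp, exists_eq_left,
      mem_tileBits_thirteen, mem_tileBits_nineteen]
    omega

end TilesIco

lemma sum_seven_mul_two_pow (a n : ℕ) :
    ((List.range n).map fun i => 7 * 2 ^ (a + 3 * i)).sum = 2 ^ (a + 3 * n) - 2 ^ a := by
  induction n with
  | zero => simp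
  | succ n ih =>
    have : 2 ^ a ≤ 2 ^ (a + 3 * n) := Nat.pow_le_pow_right two_pos (by omega)
    rw [List.range_succ, List.map_append, List.sum_append, ih, mul_add_one, ← add_assoc,
      pow_add _ _ 3]
    simp only [List.map_singleton, List.sum_singleton]
    omega

lemma isTiling_sevens {S : Finset ℕ} (hS : 7 ∈ S) (a n : ℕ) :
    IsTiling S (2 ^ (a + 3 * n) - 2 ^ a) ((List.range n).map fun i => (a + 3 * i, 7)) := by
  refine ⟨by simp [hS], ?_, by simpa [Function.comp_def] using sum_seven_mul_two_pow a n⟩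
  refine (List.pairwise_map.2 (List.pairwise_lt_range.imp fun hij => ?_)).isChain
  constructor <;> omega

lemma stilde_two_pow_sub (a n : ℕ) : stilde tileSet (2 ^ (a + 3 * n) - 2 ^ a) = n := by
  refine le_antisymm (sInf_le ⟨_, isTiling_sevens (by decide) a n, by simp⟩) (le_sInf ?_)
  rintro _ ⟨L, hL, rfl⟩
  have h := hL.binDigitSum_le binDigitSum_le_three_of_mem_tileSet
  rw [binDigitSum_two_pow_sub (by omega)] at h
  exact_mod_cast (by omega : n ≤ L.length)

theorem stmt12_general (a n : ℕ) :
    stilde {1, 3, 5, 7, 9, 11, 13, 19} (2 ^ (a + 3 * (n + 1)) - 2 ^ a) = ((n + 1 : ℕ) : ℕ∞) ∧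
    ∀ L : List (ℕ × ℕ),
      IsTiling {1, 3, 5, 7, 9, 11, 13, 19} (2 ^ (a + 3 * (n + 1)) - 2 ^ a) L →
      L.length = n + 1 →
        L[n]? = some (a + 3 * n, 7) ∨
        (L[n]? = some (a + 3 * n - 1, 13) ∧ L[n - 1]? = some (a + 3 * n - 3, 11)) ∨
        (L[n]? = some (a + 3 * n - 1, 11) ∧ L[n - 1]? = some (a + 3 * n - 3, 19)) ∨
        (L[n]? = some (a + 3 * n - 1, 13) ∧ L[n - 1]? = some (a + 3 * n - 4, 19) ∧
          L[n - 2]? = some (a + 3 * n - 6, 19)) := by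
  refine ⟨stilde_two_pow_sub a (n + 1), fun L hL hlen => ?_⟩
  have hS := binDigitSum_le_three_of_mem_tileSet
  have hsum : 3 * L.length ≤ binDigitSum (2 ^ (a + 3 * (n + 1)) - 2 ^ a) := by
    rw [binDigitSum_two_pow_sub (by omega)]
    omega
  have hheavy : ∀ p ∈ L, p.2 ∈ heavyTiles := fun p hp =>
    mem_heavyTiles_of_binDigitSum_eq_three _ (hL.1 p hp) (hL.binDigitSum_eq_of_mem hS hsum hp)
  have htiles : TilesIco L a (a + 3 * (n + 1)) := hL.tilesIco (by omega) hS (by omega)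
  obtain ⟨b, h | h | h | h⟩ := htiles.exists_isSuffix (by omega) hheavy hL.pairwise_tileLT
  all_goals
    obtain ⟨hb, M, rfl⟩ := h
    simp only [List.length_append, List.length_cons, List.length_nil] at hlen
  · exact Or.inl (by grind)
  · exact Or.inr <| Or.inl ⟨by grind, by grind⟩
  · exact Or.inr <| Or.inr <| Or.inl ⟨by grind, by grind⟩
  · exact Or.inr <| Or.inr <| Or.inr ⟨by grind, by grind, by grind⟩

theorem stmt12 (k : ℕ) (hk : k ≤ 7) :
    stilde {1, 3, 5, 7, 9, 11, 13, 19} (2 ^ (27 - 3 * k) - 8) = ((8 - k : ℕ) : ℕ∞) ∧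
    ∀ L : List (ℕ × ℕ),
      IsTiling {1, 3, 5, 7, 9, 11, 13, 19} (2 ^ (27 - 3 * k) - 8) L →
      L.length = 8 - k →
        L[7 - k]? = some (24 - 3 * k, 7) ∨
        (L[7 - k]? = some (23 - 3 * k, 13) ∧ L[6 - k]? = some (21 - 3 * k, 11)) ∨
        (L[7 - k]? = some (23 - 3 * k, 11) ∧ L[6 - k]? = some (21 - 3 * k, 19)) ∨
        (L[7 - k]? = some (23 - 3 * k, 13) ∧ L[6 - k]? = some (20 - 3 * k, 19) ∧
          L[5 - k]? = some (18 - 3 * k, 19)) := by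
  interval_cases k
  exacts [stmt12_general 3 7, stmt12_general 3 6, stmt12_general 3 5, stmt12_general 3 4,
    stmt12_general 3 3, stmt12_general 3 2, stmt12_general 3 1, stmt12_general 3 0]
end

section
/- Let S = {1,3,5,9,19} and r = 2^{27}−8. Then s̃(r,S) = 9 and the unique r-tiling sequence with tiles in S of length 9 is (3,19),(5,19),(8,5),(11,19),(13,19),(16,5),(19,19),(21,19),(24,5); that is, 2^{27}−8 = 5·2^{24}+19·2^{21}+19·2^{19}+5·2^{16}+19·2^{13}+19·2^{11}+5·2^{8}+19·2^{5}+19·2^{3} and K̃(r,S) consists of exactly this one sequence. -/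
open scoped BigOperators

/-!
Writing what is left to tile after the layers at positions `< b` as `2 ^ b * (2 ^ (n - b) - 1 - c)`
turns a tiling into a walk on the carries `c`, a layer `A` leading from `c` to `(c + ∑ A - 1) / 2`.
Carries below `∑ S` stay below `∑ S`, so the walk takes place in a finite graph, and minimal tilings
are cheapest walks of `n` steps that end in `0`. A potential certifies that a cycle costs at least
`3` tiles for `8` levels, and the lower bound follows by telescoping. In a tiling which attains it
every step is tight for the potential, and from the carry `7` of `2 ^ n - 8` there is only one way
to continue by tight steps.
-/

/-- The strict order in which the tiles `(b, ℓ)` of a tiling sequence are listed. -/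
def TileOrder (p q : ℕ × ℕ) : Prop := p.1 ≤ q.1 ∧ (p.1 = q.1 → q.2 < p.2)

instance : IsTrans (ℕ × ℕ) TileOrder where
  trans _ _ _ h h' := by
    unfold TileOrder at *
    omega

instance : Std.Asymm TileOrder where
  asymm _ _ h h' := by
    unfold TileOrder at *
    omega

/-- Layer `b` of a list of tiles: the lengths `ℓ ∈ S` of its tiles at position `b`. -/
def layer (S : Finset ℕ) (L : List (ℕ × ℕ)) (b : ℕ) : Finset ℕ := {ℓ ∈ S | (b, ℓ) ∈ L}

theorem layer_subset (S : Finset ℕ) (L : List (ℕ × ℕ)) (b : ℕ) : layer S L b ⊆ S :=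
  Finset.filter_subset _ _

/-- The number tiled by the layers `A 0, …, A (n - 1)`. -/
def layeredSum (A : ℕ → Finset ℕ) (n : ℕ) : ℕ :=
  ∑ b ∈ Finset.range n, (∑ ℓ ∈ A b, ℓ) * 2 ^ b

theorem layeredSum_succ (A : ℕ → Finset ℕ) (n : ℕ) :
    layeredSum A (n + 1) = ∑ ℓ ∈ A 0, ℓ + 2 * layeredSum (fun b => A (b + 1)) n := by
  rw [layeredSum, layeredSum, Finset.sum_range_succ', Finset.mul_sum, pow_zero, mul_one, add_comm]
  exact congrArg _ (Finset.sum_congr rfl fun b _ => by ring)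

namespace IsTiling

variable {S : Finset ℕ} {r n : ℕ} {L M : List (ℕ × ℕ)}

theorem pairwise (hL : IsTiling S r L) : L.Pairwise TileOrder :=
  List.isChain_iff_pairwise.mp hL.2.1

theorem mem_layer_iff (hL : IsTiling S r L) {b ℓ : ℕ} : ℓ ∈ layer S L b ↔ (b, ℓ) ∈ L := by
  simpa [layer] using hL.1 (b, ℓ)

theorem lt_of_mem (hS : 0 ∉ S) (hL : IsTiling S r L) (hr : r < 2 ^ n) {p : ℕ × ℕ}
    (hp : p ∈ L) : p.1 < n := by
  have hpos : 0 < p.2 := Nat.pos_of_ne_zero fun h0 => hS (h0 ▸ hL.1 p hp)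
  have hle : p.2 * 2 ^ p.1 ≤ r := hL.2.2 ▸ List.le_sum_of_mem (List.mem_map_of_mem hp)
  refine (Nat.pow_lt_pow_iff_right Nat.one_lt_two).mp ?_
  exact (Nat.le_mul_of_pos_left _ hpos).trans_lt (hle.trans_lt hr)

theorem sum_map_eq_sum_layer {R : Type*} [AddCommMonoid R] (hS : 0 ∉ S) (hL : IsTiling S r L)
    (hr : r < 2 ^ n) (f : ℕ × ℕ → R) :
    (L.map f).sum = ∑ b ∈ Finset.range n, ∑ ℓ ∈ layer S L b, f (b, ℓ) := by
  have hnodup : L.Nodup := hL.pairwise.imp fun h => ne_of_irrefl h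
  rw [← List.sum_toFinset f hnodup]
  refine Finset.sum_finset_product _ _ _ fun p => ?_
  rw [List.mem_toFinset, hL.mem_layer_iff, Finset.mem_range]
  exact ⟨fun hp => ⟨hL.lt_of_mem hS hr hp, hp⟩, And.right⟩

theorem layeredSum_layer (hS : 0 ∉ S) (hL : IsTiling S r L) (hr : r < 2 ^ n) :
    layeredSum (layer S L) n = r := by
  simp_rw [layeredSum, Finset.sum_mul]
  exact (hL.sum_map_eq_sum_layer hS hr _).symm.trans hL.2.2

theorem length_eq_sum_card_layer (hS : 0 ∉ S) (hL : IsTiling S r L) (hr : r < 2 ^ n) :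
    L.length = ∑ b ∈ Finset.range n, (layer S L b).card := by
  simpa using hL.sum_map_eq_sum_layer hS hr fun _ => (1 : ℕ)

theorem eq_of_layer_eq (hS : 0 ∉ S) (hL : IsTiling S r L) (hM : IsTiling S r M)
    (hr : r < 2 ^ n) (h : ∀ b < n, layer S L b = layer S M b) : L = M := by
  refine hL.pairwise.eq_of_mem_iff hM.pairwise fun p => ⟨fun hp => ?_, fun hp => ?_⟩
  · rwa [← hM.mem_layer_iff, ← h _ (hL.lt_of_mem hS hr hp), hL.mem_layer_iff]
  · rwa [← hL.mem_layer_iff, h _ (hM.lt_of_mem hS hr hp), hM.mem_layer_iff]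

theorem stilde_eq_length (hM : IsTiling S r M)
    (hle : ∀ L, IsTiling S r L → M.length ≤ L.length) : stilde S r = M.length := by
  refine le_antisymm (sInf_le ⟨M, hM, rfl⟩) (le_sInf ?_)
  rintro _ ⟨L, hL, rfl⟩
  exact_mod_cast hle L hL

theorem Ktilde_eq_singleton (hM : IsTiling S r M)
    (hle : ∀ L, IsTiling S r L → M.length ≤ L.length)
    (huniq : ∀ L, IsTiling S r L → L.length = M.length → L = M) : Ktilde S r = {M} := by
  have hmin := hM.stilde_eq_length hle
  refine Set.ext fun L => ⟨fun ⟨hL, hlen⟩ => huniq L hL ?_, ?_⟩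
  · exact_mod_cast hlen.trans hmin
  · rintro rfl
    exact ⟨hM, hmin.symm⟩

end IsTiling

/-- If layer `A` is laid at the bottom of `2 ^ (n + 1) - 1 - c`, what remains above it is twice
`2 ^ n - 1 - nextCarry c A`. The value is meaningful for odd `c + ∑ A` only; the rounding in the
division then supplies the `- 1` of `(c + ∑ A - 1) / 2`. -/
def nextCarry (c : ℕ) (A : Finset ℕ) : ℕ := (c + ∑ ℓ ∈ A, ℓ) / 2

/-- A potential on carries: when each tile costs `p` and each level refunds `q`, no step costs
less than the potential difference it creates. Only carries below `∑ S` are constrained, as these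
are stable under `nextCarry`. -/
def IsPotential (S : Finset ℕ) (p q : ℕ) (ψ : ℕ → ℕ) : Prop :=
  ∀ c < ∑ ℓ ∈ S, ℓ, ∀ A ∈ S.powerset, Odd (c + ∑ ℓ ∈ A, ℓ) →
    ψ (nextCarry c A) + q ≤ p * A.card + ψ c

/-- A step out of carry `c` by layer `A` which attains equality in `IsPotential`. -/
def IsTightStep (p q : ℕ) (ψ : ℕ → ℕ) (c : ℕ) (A : Finset ℕ) : Prop :=
  Odd (c + ∑ ℓ ∈ A, ℓ) ∧ ψ (nextCarry c A) + q = p * A.card + ψ c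

/-- A set `D` of carries in which the tight steps stay and are deterministic. -/
structure IsRigid (S : Finset ℕ) (p q : ℕ) (ψ : ℕ → ℕ) (D : Finset ℕ) : Prop where
  lt_sum : ∀ c ∈ D, c < ∑ ℓ ∈ S, ℓ
  nextCarry_mem : ∀ c ∈ D, ∀ A ∈ S.powerset, IsTightStep p q ψ c A → nextCarry c A ∈ D
  eq_of_tight : ∀ c ∈ D, ∀ A ∈ S.powerset, ∀ B ∈ S.powerset,
    IsTightStep p q ψ c A → IsTightStep p q ψ c B → A = B

section Carry

variable {S D : Finset ℕ} {p q n c : ℕ} {ψ : ℕ → ℕ} {A B : ℕ → Finset ℕ}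

theorem nextCarry_lt_sum {T : Finset ℕ} (hc : c < ∑ ℓ ∈ S, ℓ) (hT : T ⊆ S) :
    nextCarry c T < ∑ ℓ ∈ S, ℓ := by
  have hsum : ∑ ℓ ∈ T, ℓ ≤ ∑ ℓ ∈ S, ℓ := Finset.sum_le_sum_of_subset hT
  unfold nextCarry
  omega

theorem odd_and_layeredSum_nextCarry (h : layeredSum A (n + 1) + c + 1 = 2 ^ (n + 1)) :
    Odd (c + ∑ ℓ ∈ A 0, ℓ) ∧
      layeredSum (fun b => A (b + 1)) n + nextCarry c (A 0) + 1 = 2 ^ n := by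
  rw [layeredSum_succ, pow_succ] at h
  rw [Nat.odd_iff, nextCarry]
  omega

theorem IsPotential.le_sum_card (hψ : IsPotential S p q ψ) (hc : c < ∑ ℓ ∈ S, ℓ)
    (hA : ∀ b, A b ⊆ S) (h : layeredSum A n + c + 1 = 2 ^ n) :
    ψ 0 + q * n ≤ p * ∑ b ∈ Finset.range n, (A b).card + ψ c := by
  induction n generalizing c A with
  | zero =>
    obtain rfl : c = 0 := by simpa [layeredSum] using h
    simp
  | succ n ih =>
    obtain ⟨hodd, hnext⟩ := odd_and_layeredSum_nextCarry h
    have hstep := hψ c hc (A 0) (Finset.mem_powerset.mpr (hA 0)) hodd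
    have hrest := ih (nextCarry_lt_sum hc (hA 0)) (fun b => hA (b + 1)) hnext
    rw [Finset.sum_range_succ']
    linarith

theorem IsPotential.isTightStep_and_sum_card_eq (hψ : IsPotential S p q ψ)
    (hc : c < ∑ ℓ ∈ S, ℓ) (hA : ∀ b, A b ⊆ S)
    (h : layeredSum A (n + 1) + c + 1 = 2 ^ (n + 1))
    (heq : p * ∑ b ∈ Finset.range (n + 1), (A b).card + ψ c = ψ 0 + q * (n + 1)) :
    IsTightStep p q ψ c (A 0) ∧
      p * ∑ b ∈ Finset.range n, (A (b + 1)).card + ψ (nextCarry c (A 0)) = ψ 0 + q * n := by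
  obtain ⟨hodd, hnext⟩ := odd_and_layeredSum_nextCarry h
  have hstep := hψ c hc (A 0) (Finset.mem_powerset.mpr (hA 0)) hodd
  have hrest := hψ.le_sum_card (nextCarry_lt_sum hc (hA 0)) (fun b => hA (b + 1)) hnext
  rw [Finset.sum_range_succ'] at heq
  exact ⟨⟨hodd, by linarith⟩, by linarith⟩

theorem IsRigid.layers_eq (hD : IsRigid S p q ψ D) (hψ : IsPotential S p q ψ) (hc : c ∈ D)
    (hA : ∀ b, A b ⊆ S) (hB : ∀ b, B b ⊆ S)
    (hsumA : layeredSum A n + c + 1 = 2 ^ n) (hsumB : layeredSum B n + c + 1 = 2 ^ n)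
    (hcardA : p * ∑ b ∈ Finset.range n, (A b).card + ψ c = ψ 0 + q * n)
    (hcardB : p * ∑ b ∈ Finset.range n, (B b).card + ψ c = ψ 0 + q * n) :
    ∀ b < n, A b = B b := by
  induction n generalizing c A B with
  | zero => simp
  | succ n ih =>
    obtain ⟨tightA, restA⟩ := hψ.isTightStep_and_sum_card_eq (hD.lt_sum c hc) hA hsumA hcardA
    obtain ⟨tightB, restB⟩ := hψ.isTightStep_and_sum_card_eq (hD.lt_sum c hc) hB hsumB hcardB
    have memA : A 0 ∈ S.powerset := Finset.mem_powerset.mpr (hA 0)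
    have memB : B 0 ∈ S.powerset := Finset.mem_powerset.mpr (hB 0)
    have hbottom : A 0 = B 0 := hD.eq_of_tight c hc _ memA _ memB tightA tightB
    rintro (_ | b) hb
    · exact hbottom
    · refine ih (hD.nextCarry_mem c hc _ memA tightA) (fun b => hA (b + 1))
        (fun b => hB (b + 1)) (odd_and_layeredSum_nextCarry hsumA).2 ?_ restA ?_ b (by omega)
      · exact hbottom ▸ (odd_and_layeredSum_nextCarry hsumB).2
      · exact hbottom ▸ restB

end Carry

section Tilings

variable {S D : Finset ℕ} {p q r n c : ℕ} {ψ : ℕ → ℕ} {L M : List (ℕ × ℕ)}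

theorem IsTiling.layeredSum_layer_add_carry (hS : 0 ∉ S) (hL : IsTiling S r L)
    (hr : r + c + 1 = 2 ^ n) : layeredSum (layer S L) n + c + 1 = 2 ^ n := by
  rw [hL.layeredSum_layer hS (by omega), hr]

theorem IsPotential.le_length (hψ : IsPotential S p q ψ) (hS : 0 ∉ S) (hc : c < ∑ ℓ ∈ S, ℓ)
    (hr : r + c + 1 = 2 ^ n) (hL : IsTiling S r L) :
    ψ 0 + q * n ≤ p * L.length + ψ c := by
  rw [hL.length_eq_sum_card_layer hS (by omega : r < 2 ^ n)]
  exact hψ.le_sum_card hc (layer_subset S L) (hL.layeredSum_layer_add_carry hS hr)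

theorem IsRigid.tiling_eq (hD : IsRigid S p q ψ D) (hψ : IsPotential S p q ψ) (hS : 0 ∉ S)
    (hc : c ∈ D) (hr : r + c + 1 = 2 ^ n) (hL : IsTiling S r L) (hM : IsTiling S r M)
    (hlenL : p * L.length + ψ c = ψ 0 + q * n) (hlenM : p * M.length + ψ c = ψ 0 + q * n) :
    L = M := by
  have hlt : r < 2 ^ n := by omega
  rw [hL.length_eq_sum_card_layer hS hlt] at hlenL
  rw [hM.length_eq_sum_card_layer hS hlt] at hlenM
  exact hL.eq_of_layer_eq hS hM hlt <|
    hD.layers_eq hψ hc (layer_subset S L) (layer_subset S M) (hL.layeredSum_layer_add_carry hS hr)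
      (hM.layeredSum_layer_add_carry hS hr) hlenL hlenM

end Tilings

/-- The potential certifying the lower bound for `{1, 3, 5, 9, 19}`: entry `c` is the negative of
the least cost of a sequence of steps from carry `c` to carry `0`, at cost `8` per tile and refund
`3` per level. -/
def tilePotential (c : ℕ) : ℕ :=
  [0, 3, 1, 6, 2, 4, 4, 9, 2, 5, 4, 7, 7, 7, 4, 12, 2, 5, 2, 8, 3, 7, 7, 10, 2, 10, 7, 10, 7, 7, 7,
    15, 5, 5, 3, 8, 5].getD c 0

theorem isPotential_tilePotential : IsPotential {1, 3, 5, 9, 19} 8 3 tilePotential := by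
  unfold IsPotential
  decide +kernel

-- The tight steps run `7 → 3 → 1 → 0` and then around the cycle
-- `0 → 9 → 4 → 11 → 5 → 2 → 3 → 1 → 0`.
theorem isRigid_tilePotential :
    IsRigid {1, 3, 5, 9, 19} 8 3 tilePotential {0, 1, 2, 3, 4, 5, 7, 9, 11} := by
  refine ⟨by decide, ?_, ?_⟩ <;> unfold IsTightStep <;> decide +kernel

/-- The tiling sequence of `2 ^ (8 * k + 3) - 8` which repeats `255 = 19 + 19 * 2 ^ 2 + 5 * 2 ^ 5`
in `k` consecutive blocks of eight binary digits. -/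
def periodicTiling (k : ℕ) : List (ℕ × ℕ) :=
  (List.range k).flatMap fun j => [(8 * j + 3, 19), (8 * j + 5, 19), (8 * j + 8, 5)]

theorem length_periodicTiling (k : ℕ) : (periodicTiling k).length = 3 * k := by
  simp [periodicTiling, List.length_flatMap, mul_comm]

theorem pairwise_periodicTiling (k : ℕ) : (periodicTiling k).Pairwise TileOrder := by
  refine List.pairwise_flatMap.mpr ⟨fun j _ => by simp [TileOrder], ?_⟩
  refine List.pairwise_lt_range.imp fun {i j} hij x hx y hy => ?_
  have hx_le : x.1 ≤ 8 * i + 8 := by fin_cases hx <;> simp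
  have hy_ge : 8 * j + 3 ≤ y.1 := by fin_cases hy <;> simp
  exact ⟨by omega, by omega⟩

theorem sum_periodicTiling (k : ℕ) :
    ((periodicTiling k).map fun p => p.2 * 2 ^ p.1).sum + 8 = 2 ^ (8 * k + 3) := by
  induction k with
  | zero => rfl
  | succ k ih =>
    have hblock : 2 ^ (8 * (k + 1) + 3) = 2 ^ (8 * k + 3) +
        (19 * 2 ^ (8 * k + 3) + 19 * 2 ^ (8 * k + 5) + 5 * 2 ^ (8 * k + 8)) := by ring
    rw [hblock]
    nth_rw 1 [← ih]
    simp only [periodicTiling, List.range_succ, List.flatMap_append, List.map_append,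
      List.sum_append, List.flatMap_singleton, List.map_cons, List.map_nil, List.sum_cons,
      List.sum_nil]
    ring

theorem isTiling_periodicTiling (k : ℕ) :
    IsTiling {1, 3, 5, 9, 19} (2 ^ (8 * k + 3) - 8) (periodicTiling k) := by
  refine ⟨fun p hp => ?_, (pairwise_periodicTiling k).isChain, ?_⟩
  · obtain ⟨j, -, hj⟩ := List.mem_flatMap.mp hp
    fin_cases hj <;> simp
  · exact Nat.eq_sub_of_add_eq (sum_periodicTiling k)

theorem stmt13_general (k : ℕ) :
    stilde {1, 3, 5, 9, 19} (2 ^ (8 * k + 3) - 8) = (3 * k : ℕ) ∧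
    Ktilde {1, 3, 5, 9, 19} (2 ^ (8 * k + 3) - 8) = {periodicTiling k} := by
  have hS : 0 ∉ ({1, 3, 5, 9, 19} : Finset ℕ) := by decide
  have hr : 2 ^ (8 * k + 3) - 8 + 7 + 1 = 2 ^ (8 * k + 3) := by
    rw [← sum_periodicTiling k]
    omega
  have hψ : tilePotential 0 = 0 ∧ tilePotential 7 = 9 := ⟨rfl, rfl⟩
  have hT := isTiling_periodicTiling k
  have htight : 8 * (periodicTiling k).length + tilePotential 7 =
      tilePotential 0 + 3 * (8 * k + 3) := by
    rw [length_periodicTiling]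
    omega
  have hle (L) (hL : IsTiling {1, 3, 5, 9, 19} (2 ^ (8 * k + 3) - 8) L) :
      (periodicTiling k).length ≤ L.length := by
    have := isPotential_tilePotential.le_length hS (by decide) hr hL
    omega
  rw [← length_periodicTiling k]
  refine ⟨hT.stilde_eq_length hle, hT.Ktilde_eq_singleton hle fun L hL hlen => ?_⟩
  exact isRigid_tilePotential.tiling_eq isPotential_tilePotential hS (by decide) hr hL hT
    (hlen ▸ htight) htight

theorem stmt13 :
    (2 ^ 27 - 8 : ℕ) = 5 * 2 ^ 24 + 19 * 2 ^ 21 + 19 * 2 ^ 19 + 5 * 2 ^ 16 +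
      19 * 2 ^ 13 + 19 * 2 ^ 11 + 5 * 2 ^ 8 + 19 * 2 ^ 5 + 19 * 2 ^ 3 ∧
    stilde {1, 3, 5, 9, 19} (2 ^ 27 - 8) = 9 ∧
    Ktilde {1, 3, 5, 9, 19} (2 ^ 27 - 8) =
      {[(3, 19), (5, 19), (8, 5), (11, 19), (13, 19), (16, 5), (19, 19), (21, 19),
        (24, 5)]} := by
  exact ⟨by norm_num, stmt13_general 3⟩
end

section
/- Let S = {1,9,19} and r = 3·2^{43}−8. Then s̃(r,S) = 17, and K̃(r,S) consists exactly of the 32 sequences obtained as follows: for each k ∈ {1,2,3,4,5} choose B_k to be either the block (7k−4,19),(7k−2,19),(7k+1,1) or the block (7k−4,19),(7k−2,9),(7k−1,9), and form the concatenation B_1,B_2,B_3,B_4,B_5 followed by the two final pairs (38,19),(40,19). -/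
open scoped BigOperators

/-- The two possible blocks for each `k ∈ {1,…,5}`:
`true` gives `(7k−4,19),(7k−2,19),(7k+1,1)` and
`false` gives `(7k−4,19),(7k−2,9),(7k−1,9)`. -/
def blockChoice (k : ℕ) (c : Bool) : List (ℕ × ℕ) :=
  if c then [(7 * k - 4, 19), (7 * k - 2, 19), (7 * k + 1, 1)]
  else [(7 * k - 4, 19), (7 * k - 2, 9), (7 * k - 1, 9)]

/-!
Removing the tiles placed at position `0` from a tiling of `q * 2 ^ (k + 1) - d` and halving leaves
a tiling of `q * 2 ^ k - (d + t) / 2`, where `t` is the total size of the removed tiles. So a tiling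
is a walk of length `k` on deficits, which stay positive and below the sum of all tile sizes. If
some `φ ≥ 0` satisfies `rate + φ d' ≤ cost * #T + φ d` along each step `d → d'` removing a set `T`
of tiles, then `rate * k ≤ cost * length + φ d`, and equality forces every step to be tight. For
`{1, 9, 19}` one can take `rate = 3` and `cost = 7`. The tight steps from the deficit `8` are then
forced, except at the deficit `5`, which recurs every seven positions and where the tile is `9` or
`19`; the two branches merge again before the next recurrence.
-/

/-- The order in which the tiles `(b, ℓ)` of a tiling sequence are listed: by increasing `b`, and by
decreasing `ℓ` among equal `b`. -/
def TilePrecedes (p q : ℕ × ℕ) : Prop := p.1 ≤ q.1 ∧ (p.1 = q.1 → q.2 < p.2)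

instance : IsTrans (ℕ × ℕ) TilePrecedes where
  trans _ _ _ h₁ h₂ := by unfold TilePrecedes at *; omega

/-- The translate of a list of tiles by `n` positions. -/
def shiftTiles (n : ℕ) (L : List (ℕ × ℕ)) : List (ℕ × ℕ) := L.map (Prod.map (· + n) id)

/-- The tiles with sizes in `T`, all at position `0`, in the order required of a tiling sequence. -/
def tileLayer (T : Finset ℕ) : List (ℕ × ℕ) := (T.sort (· ≥ ·)).map (Prod.mk 0)

@[simp]
theorem shiftTiles_nil (n : ℕ) : shiftTiles n [] = [] := rfl

@[simp]
theorem shiftTiles_cons (n : ℕ) (p : ℕ × ℕ) (L : List (ℕ × ℕ)) :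
    shiftTiles n (p :: L) = (p.1 + n, p.2) :: shiftTiles n L := rfl

@[simp]
theorem shiftTiles_append (n : ℕ) (L M : List (ℕ × ℕ)) :
    shiftTiles n (L ++ M) = shiftTiles n L ++ shiftTiles n M :=
  List.map_append

@[simp]
theorem shiftTiles_shiftTiles (m n : ℕ) (L : List (ℕ × ℕ)) :
    shiftTiles m (shiftTiles n L) = shiftTiles (n + m) L := by
  simp [shiftTiles, Function.comp_def, Prod.map, add_assoc]

@[simp]
theorem length_shiftTiles (n : ℕ) (L : List (ℕ × ℕ)) : (shiftTiles n L).length = L.length :=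
  List.length_map _

theorem exists_eq_shiftTiles {n : ℕ} {L : List (ℕ × ℕ)} (h : ∀ p ∈ L, n ≤ p.1) :
    ∃ M, L = shiftTiles n M := by
  refine ⟨L.map (Prod.map (· - n) id), ?_⟩
  rw [shiftTiles, List.map_map, List.map_congr_left (g := id), List.map_id]
  intro p hp
  simp [Prod.map, Nat.sub_add_cancel (h p hp)]

@[simp]
theorem tileLayer_empty : tileLayer ∅ = [] := by simp [tileLayer]

@[simp]
theorem tileLayer_singleton (a : ℕ) : tileLayer {a} = [(0, a)] := by simp [tileLayer]

@[simp]
theorem length_tileLayer (T : Finset ℕ) : (tileLayer T).length = T.card := by simp [tileLayer]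

theorem mem_tileLayer {T : Finset ℕ} {p : ℕ × ℕ} : p ∈ tileLayer T ↔ p.1 = 0 ∧ p.2 ∈ T := by
  obtain ⟨b, l⟩ := p
  simp [tileLayer, eq_comm, and_comm]

theorem tileLayer_cons {a : ℕ} {T : Finset ℕ} (ha : a ∉ T) (h : ∀ l ∈ T, l < a) :
    tileLayer (T.cons a ha) = (0, a) :: tileLayer T := by
  rw [tileLayer, Finset.sort_cons _ fun l hl => (h l hl).le, List.map_cons, tileLayer]

theorem pairwise_tileLayer (T : Finset ℕ) : (tileLayer T).Pairwise TilePrecedes :=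
  List.pairwise_map.2 <| T.sortedGT_sort.pairwise.imp fun h => ⟨le_rfl, fun _ => h⟩

theorem sum_tileLayer (T : Finset ℕ) :
    ((tileLayer T).map fun p => p.2 * 2 ^ p.1).sum = ∑ l ∈ T, l := by
  have hperm := ((T.sort_perm_toList (· ≥ ·)).map (Prod.mk 0)).map fun p => p.2 * 2 ^ p.1
  rw [tileLayer, hperm.sum_eq, List.map_map]
  simp

section Tiling

variable {S : Finset ℕ} {r : ℕ} {L M : List (ℕ × ℕ)}

theorem isTiling_iff_pairwise :
    IsTiling S r L ↔ (∀ p ∈ L, p.2 ∈ S) ∧ L.Pairwise TilePrecedes ∧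
      (L.map fun p => p.2 * 2 ^ p.1).sum = r := by
  rw [← List.isChain_iff_pairwise]
  exact Iff.rfl

theorem isTiling_nil_iff : IsTiling S r [] ↔ r = 0 := by
  simp [isTiling_iff_pairwise, eq_comm]

theorem isTiling_append_iff :
    IsTiling S r (L ++ M) ↔ ∃ a b, IsTiling S a L ∧ IsTiling S b M ∧
      (∀ p ∈ L, ∀ q ∈ M, TilePrecedes p q) ∧ a + b = r := by
  simp only [isTiling_iff_pairwise, List.mem_append, or_imp, forall_and, List.pairwise_append,
    List.map_append, List.sum_append]
  constructor
  · rintro ⟨⟨hL, hM⟩, ⟨hL', hM', hLM⟩, hr⟩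
    exact ⟨_, _, ⟨hL, hL', rfl⟩, ⟨hM, hM', rfl⟩, hLM, hr⟩
  · rintro ⟨_, _, ⟨hL, hL', rfl⟩, ⟨hM, hM', rfl⟩, hLM, hr⟩
    exact ⟨⟨hL, hM⟩, ⟨hL', hM', hLM⟩, hr⟩

theorem isTiling_shiftTiles_iff {n : ℕ} :
    IsTiling S r (shiftTiles n L) ↔ ∃ r', IsTiling S r' L ∧ 2 ^ n * r' = r := by
  have hsum : ((shiftTiles n L).map fun p => p.2 * 2 ^ p.1).sum =
      2 ^ n * (L.map fun p => p.2 * 2 ^ p.1).sum := by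
    rw [← List.sum_map_mul_left, shiftTiles, List.map_map]
    congr 1
    refine List.map_congr_left fun p _ => ?_
    simp only [Function.comp_apply, Prod.map_fst, Prod.map_snd, id_eq]
    ring
  have hpairwise : (shiftTiles n L).Pairwise TilePrecedes ↔ L.Pairwise TilePrecedes := by
    unfold TilePrecedes
    simp [shiftTiles, List.pairwise_map]
  have hmem : (∀ p ∈ shiftTiles n L, p.2 ∈ S) ↔ ∀ p ∈ L, p.2 ∈ S := List.forall_mem_map
  simp only [isTiling_iff_pairwise, hmem, hpairwise, hsum]
  simp [and_assoc]

theorem isTiling_tileLayer {T : Finset ℕ} (hT : T ⊆ S) :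
    IsTiling S (∑ l ∈ T, l) (tileLayer T) :=
  isTiling_iff_pairwise.2
    ⟨fun _ hp => hT (mem_tileLayer.1 hp).2, pairwise_tileLayer T, sum_tileLayer T⟩

theorem IsTiling.tileLayer_append_shiftTiles {T : Finset ℕ} (hT : T ⊆ S) (h : IsTiling S r M) :
    IsTiling S ((∑ l ∈ T, l) + 2 * r) (tileLayer T ++ shiftTiles 1 M) := by
  refine isTiling_append_iff.2
    ⟨_, _, isTiling_tileLayer hT, isTiling_shiftTiles_iff.2 ⟨r, h, rfl⟩, fun p hp q hq => ?_, rfl⟩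
  obtain ⟨q, -, rfl⟩ := List.mem_map.1 hq
  simp [TilePrecedes, (mem_tileLayer.1 hp).1]

theorem IsTiling.exists_tileLayer_append_shiftTiles (h : IsTiling S r L) :
    ∃ T ⊆ S, ∃ r' M, IsTiling S r' M ∧ (∑ l ∈ T, l) + 2 * r' = r ∧
      L = tileLayer T ++ shiftTiles 1 M := by
  induction L generalizing r with
  | nil =>
    obtain rfl := isTiling_nil_iff.1 h
    exact ⟨∅, S.empty_subset, 0, [], h, by simp, by simp⟩
  | cons p L ih =>
    have hsplit := h
    rw [← List.singleton_append, isTiling_append_iff] at hsplit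
    obtain ⟨a, b, hp, hL, hpL, rfl⟩ := hsplit
    obtain ⟨i, l⟩ := p
    simp only [List.mem_singleton, forall_eq] at hpL
    rcases Nat.eq_zero_or_pos i with rfl | hi
    · obtain ⟨T, hT, r', M, hM, rfl, rfl⟩ := ih hL
      have hlt : ∀ x ∈ T, x < l := fun x hx =>
        (hpL (0, x) (List.mem_append_left _ (mem_tileLayer.2 ⟨rfl, hx⟩))).2 rfl
      have hl : l ∉ T := fun hl => (hlt l hl).false
      have hlS : l ∈ S := hp.1 (0, l) List.mem_cons_self
      obtain rfl : l = a := by simpa using hp.2.2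
      refine ⟨T.cons l hl, Finset.cons_subset.2 ⟨hlS, hT⟩, r', M, hM, ?_, ?_⟩
      · rw [Finset.sum_cons, add_assoc]
      · rw [tileLayer_cons hl hlt, List.cons_append]
    · have hpos : ∀ q ∈ (i, l) :: L, 1 ≤ q.1 :=
        List.forall_mem_cons.2 ⟨hi, fun q hq => le_trans hi (hpL q hq).1⟩
      obtain ⟨M, hM⟩ := exists_eq_shiftTiles hpos
      rw [hM] at h ⊢
      obtain ⟨r', hr', hr⟩ := isTiling_shiftTiles_iff.1 h
      exact ⟨∅, S.empty_subset, r', M, hr', by simpa using hr, by simp⟩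

end Tiling

theorem half_sum_add_mem_Ioo {S T : Finset ℕ} {d : ℕ} (hT : T ⊆ S)
    (hd : d ∈ Finset.Ioo 0 (∑ l ∈ S, l)) (heven : Even ((∑ l ∈ T, l) + d)) :
    ((∑ l ∈ T, l) + d) / 2 ∈ Finset.Ioo 0 (∑ l ∈ S, l) := by
  have hTS : ∑ l ∈ T, l ≤ ∑ l ∈ S, l := Finset.sum_le_sum_of_subset hT
  obtain ⟨c, hc⟩ := heven
  rw [Finset.mem_Ioo] at hd ⊢
  omega

/-- A potential on deficits, certifying lower bounds for the length of tiling sequences with tiles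
in `S`. Only deficits strictly between `0` and the sum of `S` are constrained: `0` is a fixed point
of the step using no tile, so no potential with `rate > 0` could include it. -/
structure TilingPotential (S : Finset ℕ) where
  /-- The value of the potential at a deficit. -/
  val : ℕ → ℕ
  /-- The weight of a position. -/
  rate : ℕ
  /-- The weight of a tile. -/
  cost : ℕ
  cost_pos : 0 < cost
  rate_add_val_le : ∀ T ⊆ S, ∀ d ∈ Finset.Ioo 0 (∑ l ∈ S, l), Even ((∑ l ∈ T, l) + d) →
    rate + val (((∑ l ∈ T, l) + d) / 2) ≤ cost * T.card + val d

namespace TilingPotential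

variable {S : Finset ℕ} (Φ : TilingPotential S) {q k d r : ℕ} {L : List (ℕ × ℕ)}

/-- `L` is a tiling sequence of `q * 2 ^ k - d` whose length attains the lower bound given by `Φ`.
The truncated subtraction is avoided, so there is no such `L` if `q * 2 ^ k < d`. -/
def IsTight (q k d : ℕ) (L : List (ℕ × ℕ)) : Prop :=
  ∃ r, IsTiling S r L ∧ r + d = q * 2 ^ k ∧ Φ.cost * L.length + Φ.val d = Φ.rate * k

/-- The sets of tiles that can be used at the lowest position of a tight tiling of deficit `d`. -/
def tightLayers (d : ℕ) : Finset (Finset ℕ) :=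
  S.powerset.filter fun T => Even ((∑ l ∈ T, l) + d) ∧
    Φ.rate + Φ.val (((∑ l ∈ T, l) + d) / 2) = Φ.cost * T.card + Φ.val d

theorem rate_mul_le (hd : d ∈ Finset.Ioo 0 (∑ l ∈ S, l)) (h : IsTiling S r L)
    (hr : r + d = q * 2 ^ k) : Φ.rate * k ≤ Φ.cost * L.length + Φ.val d := by
  induction k generalizing d r L with
  | zero => simp
  | succ k ih =>
    obtain ⟨T, hT, r', M, hM, rfl, rfl⟩ := h.exists_tileLayer_append_shiftTiles
    rw [pow_succ, ← mul_assoc] at hr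
    have heven : Even ((∑ l ∈ T, l) + d) := Nat.even_iff.2 (by omega)
    have hstep := Φ.rate_add_val_le T hT d hd heven
    have hrest := ih (half_sum_add_mem_Ioo hT hd heven) hM (by omega)
    rw [List.length_append, length_tileLayer, length_shiftTiles, mul_add, mul_add]
    omega

theorem isTight_zero_iff : Φ.IsTight q 0 d L ↔ L = [] ∧ d = q ∧ Φ.val d = 0 := by
  constructor
  · rintro ⟨r, h, hr, htight⟩
    simp only [mul_zero, Nat.add_eq_zero_iff, mul_eq_zero, Φ.cost_pos.ne', false_or,
      List.length_eq_zero_iff] at htight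
    obtain ⟨rfl, hval⟩ := htight
    obtain rfl := isTiling_nil_iff.1 h
    exact ⟨rfl, by simpa using hr, hval⟩
  · rintro ⟨rfl, rfl, hval⟩
    exact ⟨0, isTiling_nil_iff.2 rfl, by simp, by simp [hval]⟩

theorem isTight_succ_iff (hd : d ∈ Finset.Ioo 0 (∑ l ∈ S, l)) :
    Φ.IsTight q (k + 1) d L ↔ ∃ T ∈ Φ.tightLayers d, ∃ M,
      Φ.IsTight q k (((∑ l ∈ T, l) + d) / 2) M ∧ L = tileLayer T ++ shiftTiles 1 M := by
  simp only [IsTight, tightLayers, Finset.mem_filter, Finset.mem_powerset, pow_succ, ← mul_assoc,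
    mul_add_one]
  constructor
  · rintro ⟨r, h, hr, htight⟩
    obtain ⟨T, hT, r', M, hM, rfl, rfl⟩ := h.exists_tileLayer_append_shiftTiles
    have heven : Even ((∑ l ∈ T, l) + d) := Nat.even_iff.2 (by omega)
    have hr' : r' + ((∑ l ∈ T, l) + d) / 2 = q * 2 ^ k := by omega
    have hstep := Φ.rate_add_val_le T hT d hd heven
    have hrest := Φ.rate_mul_le (half_sum_add_mem_Ioo hT hd heven) hM hr'
    rw [List.length_append, length_tileLayer, length_shiftTiles, mul_add] at htight
    exact ⟨T, ⟨hT, heven, by omega⟩, M, ⟨r', hM, hr', by omega⟩, rfl⟩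
  · rintro ⟨T, ⟨hT, heven, hstep⟩, M, ⟨r', hM, hr', htight⟩, rfl⟩
    have heven := Nat.even_iff.1 heven
    refine ⟨_, hM.tileLayer_append_shiftTiles hT, by omega, ?_⟩
    rw [List.length_append, length_tileLayer, length_shiftTiles, mul_add]
    omega

variable {Φ} in
theorem IsTight.stilde_eq (hL : Φ.IsTight q k d L) (hd : d ∈ Finset.Ioo 0 (∑ l ∈ S, l))
    (hr : r + d = q * 2 ^ k) : stilde S r = L.length := by
  obtain ⟨r', h, hr', htight⟩ := hL
  obtain rfl : r' = r := by omega
  refine le_antisymm (sInf_le ⟨L, h, rfl⟩) (le_sInf ?_)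
  rintro _ ⟨M, hM, rfl⟩
  have hle : Φ.cost * L.length ≤ Φ.cost * M.length := by
    have := Φ.rate_mul_le hd hM hr
    omega
  exact Nat.cast_le.2 (Nat.le_of_mul_le_mul_left hle Φ.cost_pos)

variable {Φ} in
theorem IsTight.Ktilde_eq (hL : Φ.IsTight q k d L) (hd : d ∈ Finset.Ioo 0 (∑ l ∈ S, l))
    (hr : r + d = q * 2 ^ k) : Ktilde S r = {M | Φ.IsTight q k d M} := by
  have hmin := hL.stilde_eq hd hr
  obtain ⟨-, -, -, htight⟩ := hL
  ext M
  rw [Ktilde, hmin, Set.mem_ofPred_eq, Set.mem_ofPred_eq, Nat.cast_inj]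
  constructor
  · rintro ⟨hM, hlen⟩
    exact ⟨r, hM, hr, by rw [hlen, htight]⟩
  · rintro ⟨r'', hM, hr'', htight'⟩
    obtain rfl : r'' = r := by omega
    exact ⟨hM, Nat.eq_of_mul_eq_mul_left Φ.cost_pos (by omega)⟩

end TilingPotential

/-- The least potential for the tiles `1, 9, 19` of rate `3` and cost `7`: its value at `d` is the
maximum of `3 * (number of steps) - 7 * (number of tiles)` over the walks starting at `d`. The value
at `0` is irrelevant. -/
def potential : TilingPotential {1, 9, 19} where
  val d := [0, 1, 4, 0, 7, 2, 3, 6, 10, 5, 5, 2, 6, 9, 9, 6, 13, 5, 8, 5, 8, 4, 5, 9, 9, 5, 12, 5,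
    12].getD d 0
  rate := 3
  cost := 7
  cost_pos := by norm_num
  rate_add_val_le := by decide +kernel

namespace potential

variable {q k : ℕ} {L : List (ℕ × ℕ)}

theorem tightLayers_of_even :
    ∀ d ∈ Finset.Ioo 0 29, Even d → potential.tightLayers d = {∅} := by
  decide +kernel

theorem tightLayers_one : potential.tightLayers 1 = {{19}} := by decide +kernel

theorem tightLayers_three : potential.tightLayers 3 = {{1}} := by decide +kernel

theorem tightLayers_five : potential.tightLayers 5 = {{9}, {19}} := by decide +kernel

theorem tightLayers_seven : potential.tightLayers 7 = {{9}} := by decide +kernel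

theorem isTight_succ_iff_of_even {d : ℕ} (hd : d ∈ Finset.Ioo 0 29) (heven : Even d) :
    potential.IsTight q (k + 1) d L ↔
      ∃ M, potential.IsTight q k (d / 2) M ∧ L = shiftTiles 1 M := by
  rw [TilingPotential.isTight_succ_iff _ hd, tightLayers_of_even d hd heven]
  simp

theorem isTight_one_succ_iff :
    potential.IsTight q (k + 1) 1 L ↔
      ∃ M, potential.IsTight q k 10 M ∧ L = (0, 19) :: shiftTiles 1 M := by
  rw [TilingPotential.isTight_succ_iff _ (by decide), tightLayers_one]
  simp

theorem isTight_three_succ_iff :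
    potential.IsTight q (k + 1) 3 L ↔
      ∃ M, potential.IsTight q k 2 M ∧ L = (0, 1) :: shiftTiles 1 M := by
  rw [TilingPotential.isTight_succ_iff _ (by decide), tightLayers_three]
  simp

theorem isTight_five_succ_iff :
    potential.IsTight q (k + 1) 5 L ↔
      (∃ M, potential.IsTight q k 7 M ∧ L = (0, 9) :: shiftTiles 1 M) ∨
        ∃ M, potential.IsTight q k 12 M ∧ L = (0, 19) :: shiftTiles 1 M := by
  rw [TilingPotential.isTight_succ_iff _ (by decide), tightLayers_five]
  simp

theorem isTight_seven_succ_iff :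
    potential.IsTight q (k + 1) 7 L ↔
      ∃ M, potential.IsTight q k 8 M ∧ L = (0, 9) :: shiftTiles 1 M := by
  rw [TilingPotential.isTight_succ_iff _ (by decide), tightLayers_seven]
  simp

theorem isTight_two_succ_iff :
    potential.IsTight q (k + 1) 2 L ↔ ∃ M, potential.IsTight q k 1 M ∧ L = shiftTiles 1 M :=
  isTight_succ_iff_of_even (by decide) (by decide)

theorem isTight_eight_add_three_iff :
    potential.IsTight q (k + 3) 8 L ↔ ∃ M, potential.IsTight q k 1 M ∧ L = shiftTiles 3 M := by
  have h₈ {N} : potential.IsTight q (k + 3) 8 N ↔ _ :=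
    isTight_succ_iff_of_even (by decide) (by decide)
  have h₄ {N} : potential.IsTight q (k + 2) 4 N ↔ _ :=
    isTight_succ_iff_of_even (by decide) (by decide)
  simp [h₈, h₄, isTight_two_succ_iff]

theorem isTight_six_add_three_iff :
    potential.IsTight q (k + 3) 6 L ↔
      ∃ M, potential.IsTight q k 1 M ∧ L = (1, 1) :: shiftTiles 3 M := by
  have h₆ {N} : potential.IsTight q (k + 3) 6 N ↔ _ :=
    isTight_succ_iff_of_even (by decide) (by decide)
  simp [h₆, isTight_three_succ_iff, isTight_two_succ_iff]

theorem isTight_one_add_four_iff :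
    potential.IsTight q (k + 4) 1 L ↔
      (∃ M, potential.IsTight q k 8 M ∧ L = [(0, 19), (2, 9), (3, 9)] ++ shiftTiles 4 M) ∨
        ∃ M, potential.IsTight q k 6 M ∧ L = [(0, 19), (2, 19)] ++ shiftTiles 4 M := by
  have h₁₀ {N} : potential.IsTight q (k + 3) 10 N ↔ _ :=
    isTight_succ_iff_of_even (by decide) (by decide)
  have h₁₂ {N} : potential.IsTight q (k + 1) 12 N ↔ _ :=
    isTight_succ_iff_of_even (by decide) (by decide)
  simp [isTight_one_succ_iff, h₁₀, isTight_five_succ_iff, isTight_seven_succ_iff, h₁₂,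
    or_and_right, exists_or]

theorem isTight_eight_add_ten_iff :
    potential.IsTight q (k + 10) 8 L ↔ ∃ c M, potential.IsTight q (k + 3) 8 M ∧
      L = blockChoice 1 c ++ shiftTiles 7 M := by
  simp [isTight_eight_add_three_iff (k := k + 7), isTight_one_add_four_iff (k := k + 3),
    isTight_eight_add_three_iff (k := k), isTight_six_add_three_iff, blockChoice, or_and_right,
    exists_or]

theorem isTight_eight_eight_iff :
    potential.IsTight 3 8 8 L ↔ L = [(3, 19), (5, 19)] := by
  have h₆ {N} : potential.IsTight 3 1 6 N ↔ _ :=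
    isTight_succ_iff_of_even (by decide) (by decide)
  have h₈ {N} : potential.IsTight 3 1 8 N ↔ _ :=
    isTight_succ_iff_of_even (by decide) (by decide)
  have h₃ : potential.val 3 = 0 := rfl
  simp [isTight_eight_add_three_iff (k := 5), isTight_one_add_four_iff (k := 1), h₆, h₈, h₃,
    TilingPotential.isTight_zero_iff]

end potential

/-- The tiling sequence of `3 * 2 ^ (7 * m + 8) - 8` consisting of `m` blocks, chosen by `f`, and
two final tiles. -/
def blockTiling {m : ℕ} (f : Fin m → Bool) : List (ℕ × ℕ) :=
  (List.ofFn fun i : Fin m => blockChoice ((i : ℕ) + 1) (f i)).flatten ++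
    [(7 * m + 3, 19), (7 * m + 5, 19)]

theorem shiftTiles_blockChoice {k : ℕ} (hk : 0 < k) (c : Bool) :
    shiftTiles 7 (blockChoice k c) = blockChoice (k + 1) c := by
  cases c <;> simp [blockChoice] <;> omega

theorem blockTiling_cons {m : ℕ} (c : Bool) (f : Fin m → Bool) :
    blockTiling (Fin.cons c f : Fin (m + 1) → Bool) =
      blockChoice 1 c ++ shiftTiles 7 (blockTiling f) := by
  have hflatten (B : List (List (ℕ × ℕ))) :
      shiftTiles 7 B.flatten = (B.map (shiftTiles 7)).flatten := List.map_flatten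
  simp [blockTiling, List.ofFn_succ, hflatten, List.map_ofFn, Function.comp_def,
    shiftTiles_blockChoice, mul_add, add_right_comm]

theorem potential.isTight_iff_eq_blockTiling {m : ℕ} {L : List (ℕ × ℕ)} :
    potential.IsTight 3 (7 * m + 8) 8 L ↔ ∃ f : Fin m → Bool, L = blockTiling f := by
  induction m generalizing L with
  | zero => simp [isTight_eight_eight_iff, blockTiling]
  | succ m ih =>
    rw [mul_add_one, show 7 * m + 7 + 8 = 7 * m + 5 + 10 by rfl, isTight_eight_add_ten_iff]
    simp [ih, Fin.exists_fin_succ_pi, blockTiling_cons]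

theorem stmt15_general (m : ℕ) :
    stilde {1, 9, 19} (3 * 2 ^ (7 * m + 8) - 8) = (3 * m + 2 : ℕ) ∧
    Ktilde {1, 9, 19} (3 * 2 ^ (7 * m + 8) - 8) =
      {L | ∃ f : Fin m → Bool,
        L = (List.ofFn fun i : Fin m => blockChoice ((i : ℕ) + 1) (f i)).flatten ++
          [(7 * m + 3, 19), (7 * m + 5, 19)]} := by
  have hd : 8 ∈ Finset.Ioo 0 (∑ l ∈ ({1, 9, 19} : Finset ℕ), l) := by decide
  have hr : 3 * 2 ^ (7 * m + 8) - 8 + 8 = 3 * 2 ^ (7 * m + 8) :=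
    Nat.sub_add_cancel (by
      have : 2 ^ 8 ≤ 2 ^ (7 * m + 8) := Nat.pow_le_pow_right two_pos (Nat.le_add_left _ _)
      omega)
  have htight : potential.IsTight 3 (7 * m + 8) 8 (blockTiling fun _ : Fin m => true) :=
    potential.isTight_iff_eq_blockTiling.2 ⟨_, rfl⟩
  have hlength : (blockTiling fun _ : Fin m => true).length = 3 * m + 2 := by
    obtain ⟨_, -, -, h⟩ := htight
    have hweights : 7 * (blockTiling fun _ : Fin m => true).length + 10 = 3 * (7 * m + 8) := h
    omega
  exact ⟨hlength ▸ htight.stilde_eq hd hr, (htight.Ktilde_eq hd hr).trans <|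
    Set.ext fun _ => potential.isTight_iff_eq_blockTiling⟩

theorem stmt15 :
    stilde {1, 9, 19} (3 * 2 ^ 43 - 8) = 17 ∧
    Ktilde {1, 9, 19} (3 * 2 ^ 43 - 8) =
      {L | ∃ f : Fin 5 → Bool,
        L = (List.ofFn fun i : Fin 5 => blockChoice ((i : ℕ) + 1) (f i)).flatten ++
          [(38, 19), (40, 19)]} :=
  stmt15_general 5
end

section
/- Let F be an algebraically closed field of characteristic 2, let c_1, c_3 ∈ F, and let a ∈ F with a ≠ 0. Then the set of t_0 ∈ F satisfying a^{36}·t_0^{6} + a^{24}·t_0^{4} + a^{12}·t_0^{2} + a^{84}·t_0 + a^{1092} + c_3^{8}·a^{324} + a^{312} + a^{156} + c_1^{4}·a^{132} + c_3^{2}·a^{120} + a^{117} + c_3·a^{84} + 1 = 0 has exactly 6 elements. -/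
/-!
In characteristic `p` the derivative of `g(X ^ p) + a X` is the constant `a`, so for `a ≠ 0` this
polynomial is separable and has as many roots in a separably closed field as its degree indicates.
For `p = 2` and `g` a cubic, these are the sextics whose only term of odd degree is linear.
-/

open Polynomial

section CommSemiring

variable {R : Type*} [CommSemiring R] {p : ℕ}

theorem separable_of_isUnit_derivative {f : R[X]} (hf : IsUnit (derivative f)) : f.Separable := by
  obtain ⟨b, hb⟩ := hf.exists_left_inv
  exact ⟨0, b, by rw [zero_mul, zero_add, hb]⟩

theorem derivative_expand_eq_zero_of_charP [CharP R p] (g : R[X]) :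
    derivative (expand R p g) = 0 := by
  rw [derivative_expand, CharP.cast_eq_zero, zero_mul, mul_zero]

theorem derivative_expand_add_C_mul_X [CharP R p] (g : R[X]) (a : R) :
    derivative (expand R p g + C a * X) = C a := by
  rw [derivative_add, derivative_expand_eq_zero_of_charP, derivative_C_mul_X, zero_add]

theorem separable_expand_add_C_mul_X [CharP R p] (g : R[X]) {a : R} (ha : IsUnit a) :
    (expand R p g + C a * X).Separable :=
  separable_of_isUnit_derivative <| by
    rw [derivative_expand_add_C_mul_X]
    exact ha.map C

theorem natDegree_expand_add_C_mul_X (hp : 1 < p) {g : R[X]} (hg : 0 < g.natDegree) (a : R) :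
    (expand R p g + C a * X).natDegree = g.natDegree * p := by
  have hlinear : (C a * X).natDegree < (expand R p g).natDegree :=
    calc (C a * X).natDegree ≤ 1 := (natDegree_C_mul_le a X).trans natDegree_X_le
      _ < g.natDegree * p := hp.trans_le (Nat.le_mul_of_pos_left p hg)
      _ = (expand R p g).natDegree := (natDegree_expand p g).symm
  rw [natDegree_add_eq_left_of_natDegree_lt hlinear, natDegree_expand]

end CommSemiring

section IsSepClosed

variable {F : Type*} [Field F] [IsSepClosed F]

theorem ncard_rootSet_eq_natDegree {k : Type*} [Field k] [Algebra k F] {f : k[X]}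
    (hf : f.Separable) : (f.rootSet F).ncard = f.natDegree := by
  rw [← Nat.card_coe_set_eq, Nat.card_eq_fintype_card,
    card_rootSet_eq_natDegree hf (IsSepClosed.splits_codomain f hf)]

theorem ncard_setOf_eval_pow_add_mul_eq_zero {p : ℕ} [CharP F p] (hp : 1 < p) {g : F[X]}
    (hg : 0 < g.natDegree) {a : F} (ha : a ≠ 0) :
    {t : F | g.eval (t ^ p) + a * t = 0}.ncard = g.natDegree * p := by
  have hsep : (expand F p g + C a * X).Separable := separable_expand_add_C_mul_X g ha.isUnit
  have hroots : {t : F | g.eval (t ^ p) + a * t = 0} = (expand F p g + C a * X).rootSet F := by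
    ext t
    simp [mem_rootSet, hsep.ne_zero, expand_eval]
  rw [hroots, ncard_rootSet_eq_natDegree hsep, natDegree_expand_add_C_mul_X hp hg]

theorem stmt17_general [CharP F 2] {a₆ a₁ : F} (h₆ : a₆ ≠ 0) (h₁ : a₁ ≠ 0) (a₄ a₂ a₀ : F) :
    {t : F | a₆ * t ^ 6 + a₄ * t ^ 4 + a₂ * t ^ 2 + a₁ * t + a₀ = 0}.ncard = 6 := by
  set g : F[X] := C a₆ * X ^ 3 + C a₄ * X ^ 2 + C a₂ * X + C a₀ with hg
  have hdeg : g.natDegree = 3 := natDegree_cubic h₆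
  have hsextic (t : F) : a₆ * t ^ 6 + a₄ * t ^ 4 + a₂ * t ^ 2 + a₁ * t + a₀ =
      g.eval (t ^ 2) + a₁ * t := by
    simp only [hg, eval_add, eval_mul, eval_C, eval_pow, eval_X]
    ring
  have hpos : 0 < g.natDegree := by rw [hdeg]; exact three_pos
  simp only [hsextic, ncard_setOf_eval_pow_add_mul_eq_zero one_lt_two hpos h₁, hdeg,
    Nat.reduceMul]

end IsSepClosed

theorem stmt17 (F : Type*) [Field F] [IsAlgClosed F] [CharP F 2]
    (c1 c3 a : F) (ha : a ≠ 0) :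
    {t0 : F | a ^ 36 * t0 ^ 6 + a ^ 24 * t0 ^ 4 + a ^ 12 * t0 ^ 2 + a ^ 84 * t0 +
      a ^ 1092 + c3 ^ 8 * a ^ 324 + a ^ 312 + a ^ 156 + c1 ^ 4 * a ^ 132 +
      c3 ^ 2 * a ^ 120 + a ^ 117 + c3 * a ^ 84 + 1 = 0}.ncard = 6 := by
  simpa only [add_assoc] using
    stmt17_general (pow_ne_zero 36 ha) (pow_ne_zero 84 ha) (a ^ 24) (a ^ 12) _
end
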